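/- Let Λc ⊆ Λ be nested lattices in ℝⁿ with finite quotient group Λ/Λc of cardinality M, and let h1, h2 be nonzero coprime integers such that no nonzero element of Λ/Λc has order dividing h1 or h2. Let f : ℝⁿ → ℝ be a continuous, integrable probability density satisfying a decay bound f(x) ≤ C(1+‖x‖)^{−(n+δ)} for some C, δ > 0, and let ψ(t) = ∫_{ℝⁿ} f(x) e^{i⟨t,x⟩} dx be its characteristic function. Assume ψ(t) = 0 for every t outside the interior of the set (2/(|h1|+|h2|))·V(Λ̂c), where Λ̂c is the Fourier dual lattice of Λc and V(Λ̂c) its Voronoi region, and assume that the restriction of f to each coset of Λc in Λ is summable with finite positive total mass F(c) = Σ_{u∈c} f(u). For each coset x of Λc in Λ and each w ∈ ℝⁿ, define P_x(w) = (1/M) Σ_{cosets y of Λc in Λ} Σ_{u ∈ x, v ∈ y with h1·u + h2·v = w} (f(u)/F(x))·(f(v)/F(y)), i.e., P_x is the conditional distribution of W = h1·U + h2·V given message x, where U is drawn from coset x with probability proportional to f, V is drawn from a uniformly random coset y with probability proportional to f, independently. Then P_x(w) = P_{x'}(w) for all cosets x, x' of Λc in Λ and all w ∈ ℝⁿ;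 that is, the relay's observation h1·U + h2·V is statistically independent of the message X (perfect secrecy). -/

import Mathlib

open scoped RealInnerProductSpace Pointwise
open MeasureTheory

noncomputable section

/-- The coset of `Λc` in `Λ` corresponding to an element `c` of the quotient group `Λ/Λc`,
viewed as a subset of `ℝⁿ`. -/
def coset {n : ℕ} (Λ Λc : AddSubgroup (EuclideanSpace ℝ (Fin n)))
    (c : Λ ⧸ Λc.addSubgroupOf Λ) : Set (EuclideanSpace ℝ (Fin n)) :=
  {u | ∃ hu : u ∈ Λ, (QuotientAddGroup.mk (⟨u, hu⟩ : Λ) : Λ ⧸ Λc.addSubgroupOf Λ) = c}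

/-- The total mass `F(c) = Σ_{u∈c} f(u)` of the density `f` on the coset `c`. -/
def cosetMass {n : ℕ} (Λ Λc : AddSubgroup (EuclideanSpace ℝ (Fin n)))
    (f : EuclideanSpace ℝ (Fin n) → ℝ) (c : Λ ⧸ Λc.addSubgroupOf Λ) : ℝ :=
  ∑' u : coset Λ Λc c, f u

/-- The conditional distribution of the relay's observation `W = h₁·U + h₂·V` given the
message (coset) `x`:
`P_x(w) = (1/M)·Σ_{cosets y} Σ_{u∈x, v∈y, h₁·u+h₂·v=w} (f(u)/F(x))·(f(v)/F(y))`,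
where `U` is drawn from the coset `x` and `V` from a uniformly random coset `y`, each with
probability proportional to `f`, independently. -/
def condDist {n : ℕ} (Λ Λc : AddSubgroup (EuclideanSpace ℝ (Fin n)))
    (f : EuclideanSpace ℝ (Fin n) → ℝ) (h₁ h₂ : ℤ)
    (x : Λ ⧸ Λc.addSubgroupOf Λ) (w : EuclideanSpace ℝ (Fin n)) : ℝ :=
  (1 / (Nat.card (Λ ⧸ Λc.addSubgroupOf Λ) : ℝ)) *
    ∑' y : Λ ⧸ Λc.addSubgroupOf Λ,
      ∑' p : {p : EuclideanSpace ℝ (Fin n) × EuclideanSpace ℝ (Fin n) //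
          p.1 ∈ coset Λ Λc x ∧ p.2 ∈ coset Λ Λc y ∧
            (h₁ : ℝ) • p.1 + (h₂ : ℝ) • p.2 = w},
        (f p.val.1 / cosetMass Λ Λc f x) * (f p.val.2 / cosetMass Λ Λc f y)

/-- The characteristic function `ψ(t) = ∫_{ℝⁿ} f(x)·e^{i⟨t,x⟩} dx` of the density `f`. -/
def charFn {n : ℕ} (f : EuclideanSpace ℝ (Fin n) → ℝ) (t : EuclideanSpace ℝ (Fin n)) : ℂ :=
  ∫ x : EuclideanSpace ℝ (Fin n), (f x : ℂ) * Complex.exp ((⟪t, x⟫ : ℂ) * Complex.I)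

/-- The Fourier dual lattice `Λ̂ = {t : ⟨t, λ⟩ ∈ 2πℤ for all λ ∈ Λ}`. -/
def fourierDual {n : ℕ} (Λ : Set (EuclideanSpace ℝ (Fin n))) : Set (EuclideanSpace ℝ (Fin n)) :=
  {t | ∀ l ∈ Λ, ∃ k : ℤ, ⟪t, l⟫ = 2 * Real.pi * k}

/-- The (closed) Voronoi region `V(L) = {x : ‖x‖ ≤ ‖x − μ‖ for all μ ∈ L}` of `L ⊆ ℝⁿ`. -/
def voronoi {n : ℕ} (L : Set (EuclideanSpace ℝ (Fin n))) : Set (EuclideanSpace ℝ (Fin n)) :=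
  {x | ∀ μ ∈ L, ‖x‖ ≤ ‖x - μ‖}

/-!
For a continuous, decaying `f` whose Fourier transform vanishes at the nonzero points of the dual
of `Λc`, Poisson summation leaves only the constant term, so `∑ l ∈ Λc, f (x + l)` does not depend
on `x`. This applies to `f` itself, making all coset masses equal. As multiplication by `h₂` is
injective on `Λ/Λc`, a single `y` contributes to `P_x(w)`, and by Bézout, `a h₁ + b h₂ = 1`, its
numerator is the sum over one coset of `s ↦ f (a w + h₂ s) f (b w - h₁ s)`. The Fourier transform
of this product is a convolution, supported in `h₂ • S - h₁ • S` when that of `f` is supported in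
`S`; if `S` is the open Voronoi cell scaled by `2 / (|h₁| + |h₂|)`, this set lies in the open cell
scaled by `2`, which contains no nonzero dual vector, so the numerator is constant as well.

The lattice `Λc` has full rank because `ψ 0 ≠ 0` puts `0` in the interior of the Voronoi region,
whereas a vector orthogonal to `Λc` would give a line of dual vectors through `0`.
-/

open Set Filter Topology TopologicalSpace UnitAddTorus Asymptotics
open scoped FourierTransform

section Torus

variable {ι : Type*}

/-- The projection `ℝ^ι → (ℝ/ℤ)^ι`. -/
def toUnitAddTorus (x : ι → ℝ) : UnitAddTorus ι := fun i ↦ (x i : UnitAddCircle)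

lemma isOpenQuotientMap_toUnitAddTorus :
    IsOpenQuotientMap (toUnitAddTorus : (ι → ℝ) → UnitAddTorus ι) :=
  IsOpenQuotientMap.piMap fun _ ↦ QuotientAddGroup.isOpenQuotientMap_mk

lemma toUnitAddTorus_eq_iff {x y : ι → ℝ} :
    toUnitAddTorus x = toUnitAddTorus y ↔ ∃ m : ι → ℤ, x = y + fun i ↦ (m i : ℝ) := by
  simp only [toUnitAddTorus, funext_iff, QuotientAddGroup.eq_iff_sub_mem,
    AddSubgroup.mem_zmultiples_iff, Classical.skolem (b := fun _ ↦ ℤ), Pi.add_apply, zsmul_one,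
    sub_eq_iff_eq_add', eq_comm (b := (_ - _ : ℝ))]

lemma toUnitAddTorus_add_intCast (x : ι → ℝ) (m : ι → ℤ) :
    toUnitAddTorus (x + fun i ↦ (m i : ℝ)) = toUnitAddTorus x :=
  toUnitAddTorus_eq_iff.2 ⟨m, rfl⟩

lemma exists_continuousMap_toUnitAddTorus_eq_tsum [Finite ι] {f : C(ι → ℝ, ℂ)}
    (hf : ∀ K : Compacts (ι → ℝ), Summable fun m : ι → ℤ ↦
      ‖(f.comp (.addRight fun i ↦ (m i : ℝ))).restrict K‖) :
    ∃ Q : C(UnitAddTorus ι, ℂ), ∀ x,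
      Q (toUnitAddTorus x) = ∑' m : ι → ℤ, f (x + fun i ↦ (m i : ℝ)) := by
  let P : C(ι → ℝ, ℂ) := ∑' m : ι → ℤ, f.comp (.addRight fun i ↦ (m i : ℝ))
  have hP (x) : P x = ∑' m : ι → ℤ, f (x + fun i ↦ (m i : ℝ)) :=
    (ContinuousMap.tsum_apply (ContinuousMap.summable_of_locally_summable_norm hf) x).symm
  have hinv (x y) (hxy : toUnitAddTorus x = toUnitAddTorus y) : P x = P y := by
    obtain ⟨m, rfl⟩ := toUnitAddTorus_eq_iff.1 hxy
    rw [hP, hP, ← (Equiv.addLeft m).tsum_eq fun j : ι → ℤ ↦ f (y + fun i ↦ (j i : ℝ))]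
    refine tsum_congr fun j ↦ congrArg f (funext fun i ↦ ?_)
    simp [add_assoc]
  let π : C(ι → ℝ, UnitAddTorus ι) :=
    ⟨toUnitAddTorus, isOpenQuotientMap_toUnitAddTorus.continuous⟩
  have hπ : IsQuotientMap π := isOpenQuotientMap_toUnitAddTorus.isQuotientMap
  exact ⟨hπ.lift P hinv, fun x ↦ (DFunLike.congr_fun (hπ.lift_comp P hinv) x).trans (hP x)⟩

variable [Fintype ι]

lemma norm_mFourier_apply_le_one (k : ι → ℤ) (z : UnitAddTorus ι) : ‖mFourier k z‖ ≤ 1 :=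
  (ContinuousMap.norm_coe_le_norm _ z).trans mFourier_norm.le

lemma mFourier_toUnitAddTorus (k : ι → ℤ) (x : ι → ℝ) :
    mFourier k (toUnitAddTorus x) = Real.fourierChar (∑ i, k i * x i) := by
  simp only [mFourier, toUnitAddTorus, ContinuousMap.coe_mk, fourier_coe_apply,
    Real.fourierChar_apply, ← Complex.exp_sum]
  push_cast
  rw [Finset.mul_sum, Finset.sum_mul]
  exact congrArg _ (Finset.sum_congr rfl fun i _ ↦ by ring)

lemma integral_eq_tsum_setIntegral_unitCube {F : (ι → ℝ) → ℂ} (hF : Integrable F) :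
    ∫ x, F x = ∑' m : ι → ℤ,
      ∫ x in pi univ fun _ ↦ Ico (0 : ℝ) 1, F (x + fun i ↦ (m i : ℝ)) := by
  let b := Pi.basisFun ℝ ι
  let L := Submodule.span ℤ (range b)
  have : VAddInvariantMeasure L (ι → ℝ) volume :=
    inferInstanceAs (VAddInvariantMeasure L.toAddSubgroup _ _)
  have hdom : ZSpan.fundamentalDomain b = pi univ fun _ ↦ Ico (0 : ℝ) 1 := by
    ext x; simp [b, ZSpan.mem_fundamentalDomain]
  have hL (v : L) : (fun i ↦ (((b.restrictScalars ℤ).equivFun v) i : ℝ)) = (v : ι → ℝ) :=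
    funext fun i ↦ b.restrictScalars_repr_apply ℤ v i
  rw [(ZSpan.isAddFundamentalDomain b volume).integral_eq_tsum'' F hF, hdom,
    ← (b.restrictScalars ℤ).equivFun.toEquiv.tsum_eq]
  refine tsum_congr fun v ↦ ?_
  simp only [Submodule.vadd_def, vadd_eq_add, LinearEquiv.coe_toEquiv, hL, add_comm]

lemma mFourierCoeff_eq_setIntegral_unitCube (Q : C(UnitAddTorus ι, ℂ)) (k : ι → ℤ) :
    mFourierCoeff Q k = ∫ x in pi univ fun _ ↦ Ico (0 : ℝ) 1,
      mFourier (-k) (toUnitAddTorus x) * Q (toUnitAddTorus x) := by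
  have hcube : {x : ι → ℝ | ∀ i, x i ∈ Ioc ((0 : ι → ℝ) i) ((0 : ι → ℝ) i + 1)} =ᵐ[volume]
      pi univ fun _ ↦ Ico (0 : ℝ) 1 := by
    simpa only [Pi.zero_apply, zero_add, Set.pi, mem_univ, true_imp_iff] using!
      (Measure.univ_pi_Ioc_ae_eq_Icc (μ := fun _ : ι ↦ (volume : Measure ℝ))
        (f := fun _ ↦ 0) (g := fun _ ↦ 1)).trans Measure.univ_pi_Ico_ae_eq_Icc.symm
  rw [mFourierCoeff_eq_integral Q k 0, setIntegral_congr_set hcube]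
  rfl

lemma mFourierCoeff_eq_integral_of_eq_tsum {f : C(ι → ℝ, ℂ)} (hint : Integrable f)
    (hf : ∀ K : Compacts (ι → ℝ), Summable fun m : ι → ℤ ↦
      ‖(f.comp (.addRight fun i ↦ (m i : ℝ))).restrict K‖)
    {Q : C(UnitAddTorus ι, ℂ)}
    (hQ : ∀ x, Q (toUnitAddTorus x) = ∑' m : ι → ℤ, f (x + fun i ↦ (m i : ℝ)))
    (k : ι → ℤ) :
    mFourierCoeff Q k = ∫ x, mFourier (-k) (toUnitAddTorus x) * f x := by
  let χ (x : ι → ℝ) : ℂ := mFourier (-k) (toUnitAddTorus x)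
  have hχ : Continuous χ :=
    (mFourier (-k)).continuous.comp isOpenQuotientMap_toUnitAddTorus.continuous
  have hχf : Integrable fun x ↦ χ x * f x :=
    hint.bdd_mul (c := 1) hχ.aestronglyMeasurable
      (.of_forall fun _ ↦ norm_mFourier_apply_le_one _ _)
  let cube : Set (ι → ℝ) := pi univ fun _ ↦ Ico (0 : ℝ) 1
  let K : Compacts (ι → ℝ) :=
    ⟨pi univ fun _ ↦ Icc (0 : ℝ) 1, isCompact_univ_pi fun _ ↦ isCompact_Icc⟩
  have hcubeK : cube ⊆ K := pi_mono fun _ _ ↦ Ico_subset_Icc_self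
  have hcube : volume cube < ⊤ := (measure_mono hcubeK).trans_lt K.isCompact.measure_lt_top
  have hbound (m : ι → ℤ) (x) (hx : x ∈ cube) : ‖χ x * f (x + fun i ↦ (m i : ℝ))‖ ≤
      ‖(f.comp (.addRight fun i ↦ (m i : ℝ))).restrict K‖ := by
    rw [norm_mul]
    exact (mul_le_of_le_one_left (norm_nonneg _) (norm_mFourier_apply_le_one _ _)).trans
      (ContinuousMap.norm_coe_le_norm ((f.comp (.addRight fun i ↦ (m i : ℝ))).restrict
        (K : Set (ι → ℝ))) ⟨x, hcubeK hx⟩)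
  rw [mFourierCoeff_eq_setIntegral_unitCube, integral_eq_tsum_setIntegral_unitCube hχf]
  simp only [χ, toUnitAddTorus_add_intCast, hQ, ← tsum_mul_left]
  change ∫ x in cube, ∑' m : ι → ℤ, χ x * f (x + fun i ↦ (m i : ℝ)) =
    ∑' m : ι → ℤ, ∫ x in cube, χ x * f (x + fun i ↦ (m i : ℝ))
  refine (integral_tsum_of_summable_integral_norm (fun m ↦ ?_) ?_).symm
  · exact Measure.integrableOn_of_bounded hcube.ne (by fun_prop)
      (ae_restrict_of_forall_mem (.univ_pi fun _ ↦ measurableSet_Ico) (hbound m))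
  · refine .of_nonneg_of_le (fun _ ↦ integral_nonneg fun _ ↦ norm_nonneg _) (fun m ↦ ?_)
      ((hf K).mul_right (volume.real cube))
    refine (Real.le_norm_self _).trans (norm_setIntegral_le_of_norm_le_const hcube fun x hx ↦ ?_)
    simpa only [norm_norm] using hbound m x hx

theorem tsum_add_intCast_eq_tsum_integral_mFourier {f : C(ι → ℝ, ℂ)} (hint : Integrable f)
    (hf : ∀ K : Compacts (ι → ℝ), Summable fun m : ι → ℤ ↦
      ‖(f.comp (.addRight fun i ↦ (m i : ℝ))).restrict K‖)
    (hsum : Summable fun k : ι → ℤ ↦ ∫ y, mFourier (-k) (toUnitAddTorus y) * f y) (x : ι → ℝ) :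
    ∑' m : ι → ℤ, f (x + fun i ↦ (m i : ℝ)) =
      ∑' k : ι → ℤ, (∫ y, mFourier (-k) (toUnitAddTorus y) * f y) *
        mFourier k (toUnitAddTorus x) := by
  obtain ⟨Q, hQ⟩ := exists_continuousMap_toUnitAddTorus_eq_tsum hf
  have hcoeff := mFourierCoeff_eq_integral_of_eq_tsum hint hf hQ
  rw [← hQ, ← (hasSum_mFourier_series_apply_of_summable
    (by simpa only [← hcoeff] using hsum) (toUnitAddTorus x)).tsum_eq]
  simp only [hcoeff, smul_eq_mul]

end Torus

section Lattice

variable {V : Type*} [NormedAddCommGroup V] [InnerProductSpace ℝ V] [FiniteDimensional ℝ V]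

lemma exists_forall_inner_eq_sum_mul_repr {ι : Type*} [Fintype ι] (b : Module.Basis ι ℝ V)
    (k : ι → ℝ) : ∃ t : V, ∀ v, ⟪t, v⟫ = ∑ i, k i * b.repr v i :=
  ⟨(InnerProductSpace.toDual ℝ V).symm (LinearMap.toContinuousLinearMap (∑ i, k i • b.coord i)),
    fun v ↦ by rw [InnerProductSpace.toDual_symm_apply]; simp⟩

section Basis

variable {L : Submodule ℤ V} [DiscreteTopology L] [IsZLattice ℝ L] {ι : Type*}
  (bL : Module.Basis ι ℤ L)

lemma exists_mem_dualSubmodule_inner_eq [Fintype ι] (k : ι → ℤ) :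
    ∃ t ∈ LinearMap.BilinForm.dualSubmodule (innerₗ V) L,
      ∀ v, ⟪t, v⟫ = ∑ i, k i * (bL.ofZLatticeBasis ℝ L).repr v i := by
  obtain ⟨t, ht⟩ := exists_forall_inner_eq_sum_mul_repr (bL.ofZLatticeBasis ℝ L) fun i ↦ k i
  refine ⟨t, fun l hl ↦ ?_, ht⟩
  refine Submodule.mem_one.2 ⟨∑ i, k i * bL.repr ⟨l, hl⟩ i, ?_⟩
  have hrepr (i) : (bL.ofZLatticeBasis ℝ L).repr l i = bL.repr ⟨l, hl⟩ i :=
    bL.ofZLatticeBasis_repr_apply ℝ L ⟨l, hl⟩ i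
  simp [ht, hrepr]

lemma equivFunL_ofZLatticeBasis_symm_add [Finite ι] (v : V) (l : L) :
    (bL.ofZLatticeBasis ℝ L).equivFunL.symm
      ((bL.ofZLatticeBasis ℝ L).equivFunL v + fun i ↦ (bL.equivFun l i : ℝ)) = v + l := by
  rw [ContinuousLinearEquiv.symm_apply_eq, map_add]
  exact congrArg _ (funext fun i ↦ (bL.ofZLatticeBasis_repr_apply ℝ L l i).symm)

lemma summable_norm_restrict_comp_equivFunL_symm [Finite ι] {f : C(V, ℂ)}
    (hf : ∀ K : Compacts V, Summable fun l : L ↦ ‖(f.comp (.addRight (l : V))).restrict K‖)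
    (K : Compacts (ι → ℝ)) :
    Summable fun m : ι → ℤ ↦
      ‖((f.comp (bL.ofZLatticeBasis ℝ L).equivFunL.symm).comp
        (.addRight fun i ↦ (m i : ℝ))).restrict K‖ := by
  let e := (bL.ofZLatticeBasis ℝ L).equivFunL
  let K' : Compacts V := K.map e.symm e.symm.continuous
  rw [← bL.equivFun.toEquiv.summable_iff]
  refine .of_nonneg_of_le (fun _ ↦ norm_nonneg _) (fun l ↦ ?_) (hf K')
  refine (ContinuousMap.norm_le _ (norm_nonneg _)).2 fun y ↦ ?_
  have hy : e.symm (y + fun i ↦ (bL.equivFun l i : ℝ)) = e.symm y + l := by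
    simpa only [e, ContinuousLinearEquiv.apply_symm_apply] using
      equivFunL_ofZLatticeBasis_symm_add bL (e.symm y) l
  exact (congrArg (‖f ·‖) hy).trans_le (ContinuousMap.norm_coe_le_norm
    ((f.comp (.addRight (l : V))).restrict (K' : Set V)) ⟨e.symm y, mem_image_of_mem _ y.2⟩)

end Basis

variable [MeasurableSpace V] [BorelSpace V]

lemma exists_map_volume_eq_smul_volume {ι : Type*} [Fintype ι] (e : (ι → ℝ) ≃L[ℝ] V) :
    ∃ c : NNReal, Measure.map e volume = c • (volume : Measure V) :=
  have := e.isAddHaarMeasure_map volume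
  ⟨_, Measure.isAddLeftInvariant_eq_smul _ _⟩

lemma exists_fourier_eq_integral_mFourier {ι : Type*} [Fintype ι] (b : Module.Basis ι ℝ V) :
    ∃ c : ℝ, ∀ (f : V → ℂ) (k : ι → ℤ) (t : V), (∀ v, ⟪t, v⟫ = ∑ i, k i * b.repr v i) →
      ∫ y, mFourier (-k) (toUnitAddTorus y) * f (b.equivFunL.symm y) = c * 𝓕 f t := by
  let e := b.equivFunL
  obtain ⟨c, hc⟩ := exists_map_volume_eq_smul_volume e.symm
  refine ⟨c, fun f k t ht ↦ ?_⟩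
  have hchar (v : V) : mFourier (-k) (toUnitAddTorus (e v)) = Real.fourierChar (-⟪v, t⟫) := by
    rw [mFourier_toUnitAddTorus, real_inner_comm, ht, ← Finset.sum_neg_distrib]
    simp [e]
  calc ∫ y, mFourier (-k) (toUnitAddTorus y) * f (e.symm y)
      = ∫ v, mFourier (-k) (toUnitAddTorus (e v)) * f v ∂Measure.map e.symm volume := by
        refine .trans ?_ (e.symm.toHomeomorph.measurableEmbedding.integral_map _).symm
        simp
    _ = c * 𝓕 f t := by
        simp only [hc, integral_smul_nnreal_measure, Real.fourier_eq, hchar]; rfl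

theorem tsum_add_eq_tsum_of_fourier_eq_zero (L : Submodule ℤ V) [DiscreteTopology L]
    [IsZLattice ℝ L] {f : C(V, ℂ)} (hint : Integrable f)
    (hf : ∀ K : Compacts V, Summable fun l : L ↦ ‖(f.comp (.addRight (l : V))).restrict K‖)
    (hzero : ∀ t ∈ LinearMap.BilinForm.dualSubmodule (innerₗ V) L, t ≠ 0 → 𝓕 (f : V → ℂ) t = 0)
    (x : V) :
    ∑' l : L, f (x + l) = ∑' l : L, f l := by
  let ι := Fin (Module.finrank ℤ L)
  let bL : Module.Basis ι ℤ L := Module.finBasis ℤ L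
  let b := bL.ofZLatticeBasis ℝ L
  let e := b.equivFunL
  let F : C(ι → ℝ, ℂ) := f.comp e.symm
  have hFint : Integrable F := by
    obtain ⟨c, hc⟩ := exists_map_volume_eq_smul_volume e.symm
    refine (e.symm.toHomeomorph.measurableEmbedding.integrable_map_iff (μ := volume)).1 ?_
    exact hc ▸ hint.smul_measure_nnreal
  have hcoeff (k : ι → ℤ) (hk : k ≠ 0) :
      ∫ y, mFourier (-k) (toUnitAddTorus y) * F y = 0 := by
    obtain ⟨c, hc⟩ := exists_fourier_eq_integral_mFourier b
    obtain ⟨t, htL, ht⟩ := exists_mem_dualSubmodule_inner_eq bL k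
    refine (hc f k t ht).trans ?_
    rw [hzero t htL ?_, mul_zero]
    rintro rfl
    refine hk (funext fun j ↦ ?_)
    simpa [b, Finsupp.single_apply] using (ht (b j)).symm
  have hconst (v : V) : ∑' l : L, f (v + l) = ∫ y, mFourier 0 (toUnitAddTorus y) * F y := by
    calc ∑' l : L, f (v + l) = ∑' m : ι → ℤ, F (e v + fun i ↦ (m i : ℝ)) := by
          rw [← bL.equivFun.toEquiv.tsum_eq]
          exact tsum_congr fun l ↦ congrArg f (equivFunL_ofZLatticeBasis_symm_add bL v l).symm
      _ = ∑' k : ι → ℤ, (∫ y, mFourier (-k) (toUnitAddTorus y) * F y) *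
            mFourier k (toUnitAddTorus (e v)) :=
          tsum_add_intCast_eq_tsum_integral_mFourier hFint
            (summable_norm_restrict_comp_equivFunL_symm bL hf)
            (summable_of_ne_finset_zero (s := {0}) fun k hk ↦ hcoeff k (by simpa using hk)) (e v)
      _ = ∫ y, mFourier 0 (toUnitAddTorus y) * F y := by
          rw [tsum_eq_single 0 fun k hk ↦ by rw [hcoeff k hk, zero_mul]]
          simp [mFourier_zero]
  simpa using (hconst x).trans (hconst 0).symm

end Lattice

section Decay

variable {V E : Type*} [NormedAddCommGroup V] [NormedAddCommGroup E] {r : ℝ}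

lemma one_add_norm_rpow_neg_le_of_le_mul {y z : V} {A : ℝ} (hr : 0 ≤ r) (hA : 0 < A)
    (h : 1 + ‖y‖ ≤ A * (1 + ‖z‖)) : (1 + ‖z‖) ^ (-r) ≤ A ^ r * (1 + ‖y‖) ^ (-r) := by
  rw [Real.rpow_neg (by positivity), Real.rpow_neg (by positivity), ← div_eq_mul_inv,
    le_div_iff₀ (by positivity), inv_mul_le_iff₀ (by positivity),
    mul_comm, ← Real.mul_rpow (by positivity) (by positivity)]
  exact Real.rpow_le_rpow (by positivity) h hr

lemma exists_norm_le_of_isBigO_one_add_norm_rpow_neg {f : V → E}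
    (hf : f =O[⊤] fun x ↦ (1 + ‖x‖) ^ (-r)) :
    ∃ C, 0 ≤ C ∧ ∀ x, ‖f x‖ ≤ C * (1 + ‖x‖) ^ (-r) := by
  obtain ⟨C, hC, h⟩ := hf.exists_nonneg
  refine ⟨C, hC, fun x ↦ (isBigOWith_top.1 h x).trans_eq ?_⟩
  rw [Real.norm_of_nonneg (by positivity)]

lemma isBigO_one_of_isBigO_one_add_norm_rpow_neg {f : V → E} (hr : 0 ≤ r)
    (hf : f =O[⊤] fun x ↦ (1 + ‖x‖) ^ (-r)) : f =O[⊤] fun _ ↦ (1 : ℝ) := by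
  refine hf.trans (isBigO_top.2 ⟨1, fun x ↦ ?_⟩)
  rw [Real.norm_of_nonneg (by positivity)]
  simpa using Real.rpow_le_one_of_one_le_of_nonpos (by linarith [norm_nonneg x])
    (neg_nonpos.2 hr)

variable [NormedSpace ℝ V]

lemma isBigO_one_add_norm_rpow_neg_comp_affine {f : V → E} (hr : 0 ≤ r)
    (hf : f =O[⊤] fun x ↦ (1 + ‖x‖) ^ (-r)) (c : V) {m : ℝ} (hm : m ≠ 0) :
    (fun s ↦ f (c + m • s)) =O[⊤] fun s ↦ (1 + ‖s‖) ^ (-r) := by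
  have hbound (s : V) : 1 + ‖s‖ ≤ (1 + |m|⁻¹ * (1 + ‖c‖)) * (1 + ‖c + m • s‖) := by
    have hs : ‖s‖ = |m|⁻¹ * ‖(c + m • s) - c‖ := by
      rw [add_sub_cancel_left, norm_smul, Real.norm_eq_abs, inv_mul_cancel_left₀ (abs_ne_zero.2 hm)]
    calc 1 + ‖s‖ ≤ 1 + |m|⁻¹ * (‖c + m • s‖ + ‖c‖) := by rw [hs]; gcongr; exact norm_sub_le _ _
      _ ≤ 1 + |m|⁻¹ * (‖c + m • s‖ + ‖c‖) +
          (‖c + m • s‖ + |m|⁻¹ + |m|⁻¹ * ‖c‖ * ‖c + m • s‖) :=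
        le_add_of_nonneg_right (by positivity)
      _ = _ := by ring
  obtain ⟨C, hC, h⟩ := exists_norm_le_of_isBigO_one_add_norm_rpow_neg hf
  refine isBigO_top.2 ⟨C * (1 + |m|⁻¹ * (1 + ‖c‖)) ^ r, fun s ↦ (h _).trans ?_⟩
  rw [Real.norm_of_nonneg (by positivity), mul_assoc]
  gcongr
  exact one_add_norm_rpow_neg_le_of_le_mul hr (by positivity) (hbound s)

variable [FiniteDimensional ℝ V]

lemma summable_one_add_norm_rpow_neg (L : Submodule ℤ V) [DiscreteTopology L] [IsZLattice ℝ L]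
    (hr : Module.finrank ℝ V < r) : Summable fun l : L ↦ (1 + ‖(l : V)‖) ^ (-r) := by
  have hr0 : 0 ≤ r := (Nat.cast_nonneg _).trans hr.le
  refine Summable.of_norm_bounded_eventually
    (ZLattice.summable_norm_rpow L (-r) (by rw [ZLattice.rank ℝ L]; simpa using hr)) ?_
  filter_upwards [(finite_singleton (0 : L)).compl_mem_cofinite] with l hl
  rw [Real.norm_of_nonneg (by positivity)]
  exact Real.rpow_le_rpow_of_nonpos (norm_pos_iff.2 hl) (le_add_of_nonneg_left zero_le_one)
    (neg_nonpos.2 hr0)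

lemma summable_norm_restrict_comp_addRight (L : Submodule ℤ V) [DiscreteTopology L]
    [IsZLattice ℝ L] (hr : Module.finrank ℝ V < r) {f : C(V, E)}
    (hf : f =O[⊤] fun x ↦ (1 + ‖x‖) ^ (-r)) (K : Compacts V) :
    Summable fun l : L ↦ ‖(f.comp (.addRight (l : V))).restrict K‖ := by
  have hr0 : 0 ≤ r := (Nat.cast_nonneg _).trans hr.le
  obtain ⟨C, hC, h⟩ := exists_norm_le_of_isBigO_one_add_norm_rpow_neg hf
  obtain ⟨R, hR, hKR⟩ := K.isCompact.isBounded.exists_pos_norm_le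
  refine .of_nonneg_of_le (fun _ ↦ norm_nonneg _) (fun l ↦ ?_)
    ((summable_one_add_norm_rpow_neg L hr).mul_left (C * (1 + R) ^ r))
  refine (ContinuousMap.norm_le _ (by positivity)).2 fun x ↦ (h _).trans ?_
  rw [mul_assoc]
  gcongr
  refine one_add_norm_rpow_neg_le_of_le_mul hr0 (by positivity) ?_
  have hl : ‖(l : V)‖ ≤ ‖(x : V) + l‖ + R := by
    simpa using (norm_sub_le ((x : V) + l) x).trans (add_le_add_right (hKR x x.2) _)
  have : 0 ≤ R * ‖(x : V) + l‖ := by positivity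
  change 1 + ‖(l : V)‖ ≤ (1 + R) * (1 + ‖(x : V) + l‖)
  linarith

lemma integrable_of_isBigO_one_add_norm_rpow_neg [MeasurableSpace V] [BorelSpace V]
    {μ : Measure V} [μ.IsAddHaarMeasure] {f : C(V, E)} (hr : Module.finrank ℝ V < r)
    (hf : f =O[⊤] fun x ↦ (1 + ‖x‖) ^ (-r)) : Integrable f μ :=
  hf.integrable f.continuous.aestronglyMeasurable (integrable_one_add_norm hr)

end Decay

section FourierSupport

variable {V : Type*} [NormedAddCommGroup V] [InnerProductSpace ℝ V] [FiniteDimensional ℝ V]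
  [MeasurableSpace V] [BorelSpace V]

lemma fourier_comp_add_left (f : V → ℂ) (c t : V) :
    𝓕 (fun s ↦ f (c + s)) t = Real.fourierChar ⟪c, t⟫ • 𝓕 f t := by
  simpa only [Function.comp_def, add_comm c] using!
    congrFun (VectorFourier.fourierIntegral_comp_add_right Real.fourierChar volume (innerₗ V) f c) t

lemma fourier_comp_smul (f : V → ℂ) {m : ℝ} (hm : m ≠ 0) (t : V) :
    𝓕 (fun s ↦ f (m • s)) t = |(m ^ Module.finrank ℝ V)⁻¹| • 𝓕 f (m⁻¹ • t) := by
  simp only [Real.fourier_eq]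
  rw [← Measure.integral_comp_smul]
  refine integral_congr_ae (.of_forall fun s ↦ ?_)
  simp only [inner_smul_left, inner_smul_right, RCLike.conj_to_real, inv_mul_cancel_left₀ hm]

lemma support_fourier_comp_affine_subset (f : V → ℂ) (c : V) {m : ℝ} (hm : m ≠ 0) :
    Function.support (𝓕 fun s ↦ f (c + m • s)) ⊆ m • Function.support (𝓕 f) := by
  intro t ht
  rw [mem_smul_set_iff_inv_smul_mem₀ hm]
  contrapose! ht
  rw [Function.notMem_support] at ht ⊢
  rw [fourier_comp_smul (fun s ↦ f (c + s)) hm, fourier_comp_add_left, ht, smul_zero, smul_zero]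

lemma integrable_fourier_of_isBounded_support {f : V → ℂ} (hf : Integrable f)
    (hsupp : Bornology.IsBounded (Function.support (𝓕 f))) : Integrable (𝓕 f) := by
  have hcont : Continuous (𝓕 f) :=
    VectorFourier.fourierIntegral_continuous Real.continuous_fourierChar
      (by exact continuous_inner) hf
  exact hcont.integrable_of_hasCompactSupport hsupp.isCompact_closure

lemma fourier_mul_eq_convolution {f g : V → ℂ} (hf : Integrable f) (hgc : Continuous g)
    (hg : Integrable g) (hFg : Integrable (𝓕 g)) :
    𝓕 (fun s ↦ f s * g s) =
      convolution (𝓕 f) (𝓕 g) (ContinuousLinearMap.mul ℂ ℂ) volume := by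
  ext t
  have hG (s : V) : 𝓕 (fun v ↦ 𝓕 g (t - v)) s = Real.fourierChar (-⟪s, t⟫) • g s := by
    have hshift := fourier_comp_add_left (fun v ↦ 𝓕 g (-v)) (-t) s
    rw [← Real.fourierInv_eq_fourier_comp_neg, hgc.fourierInv_fourier_eq hg hFg] at hshift
    simpa only [neg_add, neg_neg, ← sub_eq_add_neg, inner_neg_left, real_inner_comm t s]
      using hshift
  calc 𝓕 (fun s ↦ f s * g s) t = ∫ s, f s • 𝓕 (fun v ↦ 𝓕 g (t - v)) s := by
        rw [Real.fourier_eq]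
        refine integral_congr_ae (.of_forall fun s ↦ ?_)
        simp only [hG, Circle.smul_def, smul_eq_mul]
        ring
    _ = ∫ v, 𝓕 f v • 𝓕 g (t - v) := by
        simpa only [flip_innerₗ] using!
          (VectorFourier.integral_fourierIntegral_smul_eq_flip (L := innerₗ V)
            Real.continuous_fourierChar (by exact continuous_inner) hf
            (hFg.comp_sub_left t)).symm
    _ = _ := rfl

lemma support_fourier_mul_subset {f g : V → ℂ} (hf : Integrable f) (hgc : Continuous g)
    (hg : Integrable g) (hFg : Integrable (𝓕 g)) :
    Function.support (𝓕 fun s ↦ f s * g s) ⊆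
      Function.support (𝓕 f) + Function.support (𝓕 g) := by
  rw [fourier_mul_eq_convolution hf hgc hg hFg]
  exact support_convolution_subset _

end FourierSupport

section Voronoi

variable {V : Type*} [NormedAddCommGroup V] [InnerProductSpace ℝ V]

/-- The open Voronoi cell of the origin with respect to a symmetric set `D`, dilated by `α`. It is
described by the inequalities `|⟪v, t⟫| < α ‖t‖² / 2`, which say that `±α t` is farther from `v`
than `0`. -/
def openVoronoiCell (D : Set V) (α : ℝ) : Set V :=
  {v | ∀ t ∈ D, t ≠ 0 → |⟪v, t⟫| < α * ‖t‖ ^ 2 / 2}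

variable {D : Set V} {α β : ℝ}

lemma smul_openVoronoiCell_subset {m : ℝ} (hm : m ≠ 0) :
    m • openVoronoiCell D α ⊆ openVoronoiCell D (|m| * α) := by
  rintro _ ⟨v, hv, rfl⟩ t ht ht0
  rw [real_inner_smul_left, abs_mul, mul_assoc, mul_div_assoc]
  gcongr
  exact hv t ht ht0

lemma openVoronoiCell_add_subset :
    openVoronoiCell D α + openVoronoiCell D β ⊆ openVoronoiCell D (α + β) := by
  rintro _ ⟨v, hv, w, hw, rfl⟩ t ht ht0
  rw [inner_add_left]
  linarith [abs_add_le ⟪v, t⟫ ⟪w, t⟫, hv t ht ht0, hw t ht ht0]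

lemma eq_zero_of_mem_openVoronoiCell (hα : α ≤ 2) {t : V} (ht : t ∈ D)
    (htα : t ∈ openVoronoiCell D α) : t = 0 := by
  by_contra ht0
  have hlt := htα t ht ht0
  rw [real_inner_self_eq_norm_sq, abs_of_nonneg (by positivity)] at hlt
  nlinarith [sq_nonneg ‖t‖]

lemma isBounded_openVoronoiCell_dualSubmodule [FiniteDimensional ℝ V] (L : Submodule ℤ V)
    [DiscreteTopology L] [IsZLattice ℝ L] (α : ℝ) :
    Bornology.IsBounded
      (openVoronoiCell (LinearMap.BilinForm.dualSubmodule (innerₗ V) L : Set V) α) := by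
  let bL := Module.finBasis ℤ L
  let b := bL.ofZLatticeBasis ℝ L
  choose τ hτL hτ using fun i ↦ exists_mem_dualSubmodule_inner_eq bL (Pi.single i 1)
  have hcoord (i) (v : V) : b.equivFunL v i = ⟪v, τ i⟫ := by
    rw [real_inner_comm, hτ]
    simp [b, Pi.single_apply]
  have hτ0 (i) : τ i ≠ 0 := fun h ↦ by simpa [h, b] using hcoord i (b i)
  have hbox : Bornology.IsBounded (pi univ fun i ↦ Metric.closedBall (0 : ℝ) (α * ‖τ i‖ ^ 2 / 2)) :=
    .pi fun _ ↦ Metric.isBounded_closedBall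
  refine (b.equivFunL.antilipschitz.isBounded_preimage hbox).subset fun v hv i _ ↦ ?_
  rw [mem_closedBall_zero_iff, hcoord]
  exact (hv _ (hτL i) (hτ0 i)).le

section Periodization

variable [FiniteDimensional ℝ V] [MeasurableSpace V] [BorelSpace V] {L : Submodule ℤ V}
  [DiscreteTopology L] [IsZLattice ℝ L] {f : C(V, ℂ)} {r : ℝ}

theorem tsum_add_eq_tsum_of_support_fourier_subset (hr : Module.finrank ℝ V < r)
    (hf : f =O[⊤] fun x ↦ (1 + ‖x‖) ^ (-r)) (hα : α ≤ 2)
    (hsupp : Function.support (𝓕 (f : V → ℂ)) ⊆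
      openVoronoiCell (LinearMap.BilinForm.dualSubmodule (innerₗ V) L : Set V) α) (x : V) :
    ∑' l : L, f (x + l) = ∑' l : L, f l :=
  tsum_add_eq_tsum_of_fourier_eq_zero L (integrable_of_isBigO_one_add_norm_rpow_neg hr hf)
    (summable_norm_restrict_comp_addRight L hr hf)
    (fun _ ht ht0 ↦ by_contra fun h ↦ ht0 (eq_zero_of_mem_openVoronoiCell hα ht (hsupp h))) x

theorem tsum_mul_add_eq_tsum_mul_of_support_fourier_subset (hr : Module.finrank ℝ V < r)
    (hf : f =O[⊤] fun x ↦ (1 + ‖x‖) ^ (-r)) {m k : ℝ} (hm : m ≠ 0) (hk : k ≠ 0)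
    (hα : (|m| + |k|) * α ≤ 2)
    (hsupp : Function.support (𝓕 (f : V → ℂ)) ⊆
      openVoronoiCell (LinearMap.BilinForm.dualSubmodule (innerₗ V) L : Set V) α) (c d x : V) :
    ∑' l : L, f (c + m • (x + l)) * f (d + k • (x + l)) =
      ∑' l : L, f (c + m • (l : V)) * f (d + k • (l : V)) := by
  have hr0 : 0 ≤ r := (Nat.cast_nonneg _).trans hr.le
  let affine (c : V) (m : ℝ) : C(V, ℂ) := f.comp ⟨fun s ↦ c + m • s, by fun_prop⟩
  have hdecay (c : V) {m : ℝ} (hm : m ≠ 0) : affine c m =O[⊤] fun s ↦ (1 + ‖s‖) ^ (-r) :=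
    isBigO_one_add_norm_rpow_neg_comp_affine hr0 hf c hm
  have hint (c : V) {m : ℝ} (hm : m ≠ 0) : Integrable (affine c m) :=
    integrable_of_isBigO_one_add_norm_rpow_neg hr (hdecay c hm)
  have hband (c : V) {m : ℝ} (hm : m ≠ 0) : Function.support (𝓕 (affine c m : V → ℂ)) ⊆
      openVoronoiCell (LinearMap.BilinForm.dualSubmodule (innerₗ V) L : Set V) (|m| * α) :=
    (support_fourier_comp_affine_subset f c hm).trans
      ((smul_set_mono hsupp).trans (smul_openVoronoiCell_subset hm))
  have hFint : Integrable (𝓕 (affine d k : V → ℂ)) :=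
    integrable_fourier_of_isBounded_support (hint d hk)
      ((isBounded_openVoronoiCell_dualSubmodule L _).subset (hband d hk))
  refine tsum_add_eq_tsum_of_support_fourier_subset (f := affine c m * affine d k) hr ?_ hα ?_ x
  · simpa using! (hdecay c hm).mul
      (isBigO_one_of_isBigO_one_add_norm_rpow_neg hr0 (hdecay d hk))
  · rw [add_mul]
    exact (support_fourier_mul_subset (hint c hm) (affine d k).continuous (hint d hk) hFint).trans
      ((add_subset_add (hband c hm) (hband d hk)).trans openVoronoiCell_add_subset)

end Periodization

end Voronoi

section FourierDual

variable {n : ℕ}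

lemma fourier_ofReal_eq_charFn (f : EuclideanSpace ℝ (Fin n) → ℝ)
    (v : EuclideanSpace ℝ (Fin n)) :
    𝓕 (fun x ↦ (f x : ℂ)) v = charFn f (-(2 * Real.pi) • v) := by
  rw [Real.fourier_eq', charFn]
  refine integral_congr_ae (.of_forall fun x ↦ ?_)
  simp only [smul_eq_mul]
  rw [mul_comm, real_inner_smul_left, real_inner_comm]
  push_cast
  ring_nf

lemma charFn_zero (f : EuclideanSpace ℝ (Fin n) → ℝ) : charFn f 0 = (∫ x, f x : ℝ) := by
  simp [charFn, integral_complex_ofReal]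

lemma neg_mem_fourierDual {S : Set (EuclideanSpace ℝ (Fin n))} {t : EuclideanSpace ℝ (Fin n)}
    (ht : t ∈ fourierDual S) : -t ∈ fourierDual S := fun l hl ↦ by
  obtain ⟨k, hk⟩ := ht l hl
  exact ⟨-k, by rw [inner_neg_left, hk]; push_cast; ring⟩

lemma two_pi_smul_mem_fourierDual {Λc : AddSubgroup (EuclideanSpace ℝ (Fin n))}
    {t : EuclideanSpace ℝ (Fin n)}
    (ht : t ∈ LinearMap.BilinForm.dualSubmodule (innerₗ _) (AddSubgroup.toIntSubmodule Λc)) :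
    (2 * Real.pi) • t ∈ fourierDual (Λc : Set (EuclideanSpace ℝ (Fin n))) := fun l hl ↦ by
  obtain ⟨k, hk⟩ := Submodule.mem_one.1 (ht l hl)
  exact ⟨k, by rw [real_inner_smul_left]; exact congrArg _ hk.symm⟩

lemma mem_voronoi_iff {D : Set (EuclideanSpace ℝ (Fin n))} {x : EuclideanSpace ℝ (Fin n)} :
    x ∈ voronoi D ↔ ∀ t ∈ D, ⟪t, x⟫ ≤ ‖t‖ ^ 2 / 2 := by
  refine forall₂_congr fun t _ ↦ ?_
  rw [← sq_le_sq₀ (norm_nonneg x) (norm_nonneg _), norm_sub_sq_real, real_inner_comm]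
  constructor <;> intro h <;> linarith

lemma inner_lt_of_mem_interior_smul_voronoi {D : Set (EuclideanSpace ℝ (Fin n))} {α : ℝ}
    (hα : 0 < α) {x t : EuclideanSpace ℝ (Fin n)} (hx : x ∈ interior (α • voronoi D))
    (ht : t ∈ D) (ht0 : t ≠ 0) : ⟪t, x⟫ < α * ‖t‖ ^ 2 / 2 := by
  have hsub : α • voronoi D ⊆ innerSL ℝ t ⁻¹' Iic (α * ‖t‖ ^ 2 / 2) := by
    rintro _ ⟨y, hy, rfl⟩
    change ⟪t, α • y⟫ ≤ _
    rw [real_inner_smul_right, mul_div_assoc]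
    exact mul_le_mul_of_nonneg_left (mem_voronoi_iff.1 hy t ht) hα.le
  have hsurj : Function.Surjective (innerSL ℝ t) :=
    LinearMap.surjective (f := (innerSL ℝ t : _ →ₗ[ℝ] ℝ)) fun h ↦
      ht0 ((inner_self_eq_zero (𝕜 := ℝ)).1 (LinearMap.congr_fun h t))
  have hinterior := interior_mono hsub hx
  rwa [(innerSL ℝ t).interior_preimage hsurj, interior_Iic] at hinterior

lemma mem_openVoronoiCell_of_neg_two_pi_smul_mem_interior
    {Λc : AddSubgroup (EuclideanSpace ℝ (Fin n))} {α : ℝ} (hα : 0 < α)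
    {v : EuclideanSpace ℝ (Fin n)}
    (hv : -(2 * Real.pi) • v ∈
      interior (α • voronoi (fourierDual (Λc : Set (EuclideanSpace ℝ (Fin n)))))) :
    v ∈ openVoronoiCell
      (LinearMap.BilinForm.dualSubmodule (innerₗ _) (AddSubgroup.toIntSubmodule Λc) :
        Set (EuclideanSpace ℝ (Fin n))) α := by
  intro t ht ht0
  have hπ : 0 < 2 * Real.pi := Real.two_pi_pos
  have htD := two_pi_smul_mem_fourierDual ht
  have hst0 : (2 * Real.pi) • t ≠ 0 := smul_ne_zero hπ.ne' ht0
  have hpos := inner_lt_of_mem_interior_smul_voronoi hα hv htD hst0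
  have hneg := inner_lt_of_mem_interior_smul_voronoi hα hv (neg_mem_fourierDual htD)
    (neg_ne_zero.2 hst0)
  simp only [norm_neg, norm_smul, Real.norm_of_nonneg hπ.le, inner_neg_left, real_inner_smul_left,
    real_inner_smul_right, real_inner_comm v t] at hpos hneg
  rw [abs_lt]
  constructor <;> refine lt_of_mul_lt_mul_left ?_ (sq_nonneg (2 * Real.pi)) <;> linarith

lemma span_eq_top_of_zero_mem_interior_smul_voronoi
    {S : Set (EuclideanSpace ℝ (Fin n))} {α : ℝ} (hα : α ≠ 0)
    (h : 0 ∈ interior (α • voronoi (fourierDual S))) : Submodule.span ℝ S = ⊤ := by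
  rw [← Submodule.orthogonal_eq_bot_iff, Submodule.eq_bot_iff]
  intro v hv
  have hdual (ε : ℝ) : ε • v ∈ fourierDual S := fun l hl ↦ ⟨0, by
    simp [real_inner_smul_left, (Submodule.mem_orthogonal' _ _).1 hv l (Submodule.subset_span hl)]⟩
  have hnhds : voronoi (fourierDual S) ∈ 𝓝 0 :=
    (set_smul_mem_nhds_zero_iff hα).1 (mem_interior_iff_mem_nhds.1 h)
  have hline : Tendsto (fun ε : ℝ ↦ ε • v) (𝓝[≠] 0) (𝓝 0) :=
    tendsto_nhdsWithin_of_tendsto_nhds (Continuous.tendsto' (by fun_prop) _ _ (zero_smul ℝ v))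
  obtain ⟨ε, hε, hε0⟩ := ((hline.eventually hnhds).and self_mem_nhdsWithin).exists
  have hεv := hε _ (hdual ε)
  rw [sub_self, norm_zero, norm_le_zero_iff] at hεv
  exact (smul_eq_zero.1 hεv).resolve_left hε0

end FourierDual

section Coset

variable {n : ℕ} {Λ Λc : AddSubgroup (EuclideanSpace ℝ (Fin n))}
  {u v w : EuclideanSpace ℝ (Fin n)} {c d ω : Λ ⧸ Λc.addSubgroupOf Λ} {a b h₁ h₂ : ℤ}

lemma add_mem_coset (hu : u ∈ coset Λ Λc c) (hv : v ∈ coset Λ Λc d) :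
    u + v ∈ coset Λ Λc (c + d) := by
  obtain ⟨hu, rfl⟩ := hu
  obtain ⟨hv, rfl⟩ := hv
  exact ⟨Λ.add_mem hu hv, rfl⟩

lemma smul_mem_coset (hu : u ∈ coset Λ Λc c) (k : ℤ) : (k : ℝ) • u ∈ coset Λ Λc (k • c) := by
  obtain ⟨hu, rfl⟩ := hu
  rw [Int.cast_smul_eq_zsmul]
  exact ⟨Λ.zsmul_mem hu k, rfl⟩

lemma sub_mem_coset (hu : u ∈ coset Λ Λc c) (hv : v ∈ coset Λ Λc d) :
    u - v ∈ coset Λ Λc (c - d) := by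
  simpa [sub_eq_add_neg] using add_mem_coset hu (smul_mem_coset hv (-1))

lemma mk_eq_mk_iff_sub_mem (hu : u ∈ Λ) (hv : v ∈ Λ) :
    (QuotientAddGroup.mk ⟨u, hu⟩ : Λ ⧸ Λc.addSubgroupOf Λ) = QuotientAddGroup.mk ⟨v, hv⟩ ↔
      u - v ∈ Λc := by
  rw [QuotientAddGroup.eq_iff_sub_mem]
  rfl

lemma eq_of_mem_coset_of_mem_coset (hc : u ∈ coset Λ Λc c) (hd : u ∈ coset Λ Λc d) : c = d := by
  obtain ⟨_, rfl⟩ := hc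
  obtain ⟨_, rfl⟩ := hd
  rfl

lemma zsmul_injective_of_forall_notMem {h : ℤ} (horder : ∀ l ∈ Λ, l ∉ Λc → h • l ∉ Λc) :
    Function.Injective fun c : Λ ⧸ Λc.addSubgroupOf Λ ↦ h • c := by
  refine (injective_iff_map_eq_zero (zsmulAddGroupHom h :
    Λ ⧸ Λc.addSubgroupOf Λ →+ Λ ⧸ Λc.addSubgroupOf Λ)).2 fun c hc ↦ ?_
  induction c using QuotientAddGroup.induction_on with | H l =>
  refine (QuotientAddGroup.eq_zero_iff l).2 (by_contra fun hl ↦ horder l l.2 hl ?_)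
  exact (QuotientAddGroup.eq_zero_iff (h • l)).1 hc

lemma cosetMass_eq_tsum_of_forall_tsum_add_eq (hle : Λc ≤ Λ) {g : EuclideanSpace ℝ (Fin n) → ℝ}
    (hg : ∀ x, ∑' l : Λc, g (x + l) = ∑' l : Λc, g l) (c : Λ ⧸ Λc.addSubgroupOf Λ) :
    cosetMass Λ Λc g c = ∑' l : Λc, g l := by
  induction c using QuotientAddGroup.induction_on with | H l₀ =>
  have hmem (u : EuclideanSpace ℝ (Fin n)) : u ∈ coset Λ Λc l₀ ↔ -l₀ + u ∈ Λc := by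
    rw [neg_add_eq_sub]
    refine ⟨fun ⟨hu, h⟩ ↦ (mk_eq_mk_iff_sub_mem hu l₀.2).1 h, fun h ↦ ?_⟩
    have hu : u ∈ Λ := by simpa using Λ.add_mem (hle h) l₀.2
    exact ⟨hu, (mk_eq_mk_iff_sub_mem hu l₀.2).2 h⟩
  let e : coset Λ Λc l₀ ≃ Λc := (Equiv.addLeft (-l₀ : EuclideanSpace ℝ (Fin n))).subtypeEquiv hmem
  rw [← hg l₀, ← e.tsum_eq]
  exact tsum_congr fun u ↦ congrArg g (add_neg_cancel_left (l₀ : EuclideanSpace ℝ (Fin n)) u).symm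

/-- The solutions `(u, v)` of `h₁ u + h₂ v = w` in a pair of cosets, parametrized by a single coset
through `s ↦ (a w + h₂ s, b w - h₁ s)` and the Bézout relation `a h₁ + b h₂ = 1`. -/
def solutionsEquivCoset (hab : a * h₁ + b * h₂ = 1) (hw : w ∈ coset Λ Λc ω)
    (c : Λ ⧸ Λc.addSubgroupOf Λ) :
    {p : EuclideanSpace ℝ (Fin n) × EuclideanSpace ℝ (Fin n) //
      p.1 ∈ coset Λ Λc (a • ω + h₂ • c) ∧ p.2 ∈ coset Λ Λc (b • ω - h₁ • c) ∧
        (h₁ : ℝ) • p.1 + (h₂ : ℝ) • p.2 = w} ≃ coset Λ Λc c where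
  toFun p := ⟨(b : ℝ) • p.1.1 - (a : ℝ) • p.1.2, by
    have hc : b • (a • ω + h₂ • c) - a • (b • ω - h₁ • c) = c := by
      linear_combination (norm := module) hab • c
    simpa only [hc] using sub_mem_coset (smul_mem_coset p.2.1 b) (smul_mem_coset p.2.2.1 a)⟩
  invFun s := ⟨((a : ℝ) • w + (h₂ : ℝ) • s, (b : ℝ) • w - (h₁ : ℝ) • s),
    add_mem_coset (smul_mem_coset hw a) (smul_mem_coset s.2 h₂),
    sub_mem_coset (smul_mem_coset hw b) (smul_mem_coset s.2 h₁), by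
    have habR : (a * h₁ + b * h₂ : ℝ) = 1 := by exact_mod_cast hab
    linear_combination (norm := module) habR • w⟩
  left_inv p := by
    have habR : (a * h₁ + b * h₂ : ℝ) = 1 := by exact_mod_cast hab
    obtain ⟨⟨u, v⟩, -, -, rfl⟩ := p
    refine Subtype.ext (Prod.ext ?_ ?_)
    · linear_combination (norm := module) habR • u
    · linear_combination (norm := module) habR • v
  right_inv s := by
    have habR : (a * h₁ + b * h₂ : ℝ) = 1 := by exact_mod_cast hab
    refine Subtype.ext ?_
    linear_combination (norm := module) habR • (s : EuclideanSpace ℝ (Fin n))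

lemma condDist_eq_zero_of_notMem (f : EuclideanSpace ℝ (Fin n) → ℝ) (hw : w ∉ Λ)
    (x : Λ ⧸ Λc.addSubgroupOf Λ) : condDist Λ Λc f h₁ h₂ x w = 0 := by
  have hempty (y : Λ ⧸ Λc.addSubgroupOf Λ) :
      IsEmpty {p : EuclideanSpace ℝ (Fin n) × EuclideanSpace ℝ (Fin n) //
        p.1 ∈ coset Λ Λc x ∧ p.2 ∈ coset Λ Λc y ∧ (h₁ : ℝ) • p.1 + (h₂ : ℝ) • p.2 = w} := by
    refine ⟨fun ⟨p, hu, hv, h⟩ ↦ hw ?_⟩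
    obtain ⟨hmem, -⟩ := add_mem_coset (smul_mem_coset hu h₁) (smul_mem_coset hv h₂)
    rwa [h] at hmem
  simp [condDist]

lemma condDist_of_mem_coset (hinj : Function.Injective fun c : Λ ⧸ Λc.addSubgroupOf Λ ↦ h₂ • c)
    (hab : a * h₁ + b * h₂ = 1) (hw : w ∈ coset Λ Λc ω) (f : EuclideanSpace ℝ (Fin n) → ℝ)
    (c : Λ ⧸ Λc.addSubgroupOf Λ) :
    condDist Λ Λc f h₁ h₂ (a • ω + h₂ • c) w = 1 / Nat.card (Λ ⧸ Λc.addSubgroupOf Λ) *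
      (cosetMass Λ Λc (fun s ↦ f ((a : ℝ) • w + (h₂ : ℝ) • s) * f ((b : ℝ) • w - (h₁ : ℝ) • s)) c /
        (cosetMass Λ Λc f (a • ω + h₂ • c) * cosetMass Λ Λc f (b • ω - h₁ • c))) := by
  have hempty (y : Λ ⧸ Λc.addSubgroupOf Λ) (hy : y ≠ b • ω - h₁ • c) :
      IsEmpty {p : EuclideanSpace ℝ (Fin n) × EuclideanSpace ℝ (Fin n) //
        p.1 ∈ coset Λ Λc (a • ω + h₂ • c) ∧ p.2 ∈ coset Λ Λc y ∧
          (h₁ : ℝ) • p.1 + (h₂ : ℝ) • p.2 = w} := by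
    refine ⟨fun ⟨p, hu, hv, h⟩ ↦ hy (hinj ?_)⟩
    have hω : h₁ • (a • ω + h₂ • c) + h₂ • y = ω := eq_of_mem_coset_of_mem_coset
      (h ▸ add_mem_coset (smul_mem_coset hu h₁) (smul_mem_coset hv h₂)) hw
    linear_combination (norm := module) hω - hab • ω
  rw [condDist, tsum_eq_single (b • ω - h₁ • c) fun y hy ↦ by
      have := hempty y hy
      exact tsum_empty,
    ← (solutionsEquivCoset hab hw c).symm.tsum_eq]
  congr 1
  exact (tsum_congr fun s ↦ div_mul_div_comm _ _ _ _).trans tsum_div_const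

end Coset

section Secrecy

variable {n : ℕ} {Λ Λc : AddSubgroup (EuclideanSpace ℝ (Fin n))}
  [DiscreteTopology (AddSubgroup.toIntSubmodule Λc)]
  [IsZLattice ℝ (AddSubgroup.toIntSubmodule Λc)]
  {f : EuclideanSpace ℝ (Fin n) → ℝ} {r α : ℝ}

lemma cosetMass_eq_tsum_of_support_fourier_subset (hle : Λc ≤ Λ) (hcont : Continuous f)
    (hr : n < r) (hf : f =O[⊤] fun x ↦ (1 + ‖x‖) ^ (-r)) (hα : α ≤ 2)
    (hsupp : Function.support (𝓕 fun x ↦ (f x : ℂ)) ⊆ openVoronoiCell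
      (LinearMap.BilinForm.dualSubmodule (innerₗ _) (AddSubgroup.toIntSubmodule Λc) :
        Set (EuclideanSpace ℝ (Fin n))) α)
    (c : Λ ⧸ Λc.addSubgroupOf Λ) : cosetMass Λ Λc f c = ∑' l : Λc, f l := by
  let F : C(EuclideanSpace ℝ (Fin n), ℂ) := ⟨fun x ↦ f x, by fun_prop⟩
  have hF : F =O[⊤] fun x ↦ (1 + ‖x‖) ^ (-r) := Complex.isBigO_ofReal_left.2 hf
  refine cosetMass_eq_tsum_of_forall_tsum_add_eq hle (fun x ↦ Complex.ofReal_injective ?_) c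
  rw [Complex.ofReal_tsum, Complex.ofReal_tsum]
  exact tsum_add_eq_tsum_of_support_fourier_subset (f := F) (by simpa using hr) hF hα hsupp x

lemma cosetMass_mul_eq_tsum_mul_of_support_fourier_subset (hle : Λc ≤ Λ) (hcont : Continuous f)
    (hr : n < r) (hf : f =O[⊤] fun x ↦ (1 + ‖x‖) ^ (-r)) {m k : ℝ} (hm : m ≠ 0) (hk : k ≠ 0)
    (hα : (|m| + |k|) * α ≤ 2)
    (hsupp : Function.support (𝓕 fun x ↦ (f x : ℂ)) ⊆ openVoronoiCell
      (LinearMap.BilinForm.dualSubmodule (innerₗ _) (AddSubgroup.toIntSubmodule Λc) :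
        Set (EuclideanSpace ℝ (Fin n))) α)
    (u v : EuclideanSpace ℝ (Fin n)) (c : Λ ⧸ Λc.addSubgroupOf Λ) :
    cosetMass Λ Λc (fun s ↦ f (u + m • s) * f (v + k • s)) c =
      ∑' l : Λc, f (u + m • (l : EuclideanSpace ℝ (Fin n))) *
        f (v + k • (l : EuclideanSpace ℝ (Fin n))) := by
  let F : C(EuclideanSpace ℝ (Fin n), ℂ) := ⟨fun x ↦ f x, by fun_prop⟩
  have hF : F =O[⊤] fun x ↦ (1 + ‖x‖) ^ (-r) := Complex.isBigO_ofReal_left.2 hf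
  refine cosetMass_eq_tsum_of_forall_tsum_add_eq hle (fun x ↦ Complex.ofReal_injective ?_) c
  simp only [Complex.ofReal_tsum, Complex.ofReal_mul]
  exact tsum_mul_add_eq_tsum_mul_of_support_fourier_subset (f := F) (by simpa using hr) hF hm hk
    hα hsupp u v x

theorem condDist_eq_of_support_fourier_subset [Finite (Λ ⧸ Λc.addSubgroupOf Λ)] (hle : Λc ≤ Λ)
    {h₁ h₂ : ℤ} (hh₁ : h₁ ≠ 0) (hh₂ : h₂ ≠ 0) (hco : IsCoprime h₁ h₂)
    (horder : ∀ l ∈ Λ, l ∉ Λc → h₂ • l ∉ Λc) (hcont : Continuous f) (hr : n < r)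
    (hf : f =O[⊤] fun x ↦ (1 + ‖x‖) ^ (-r)) (hα : (|(h₁ : ℝ)| + |(h₂ : ℝ)|) * α ≤ 2)
    (hsupp : Function.support (𝓕 fun x ↦ (f x : ℂ)) ⊆ openVoronoiCell
      (LinearMap.BilinForm.dualSubmodule (innerₗ _) (AddSubgroup.toIntSubmodule Λc) :
        Set (EuclideanSpace ℝ (Fin n))) α)
    (x x' : Λ ⧸ Λc.addSubgroupOf Λ) (w : EuclideanSpace ℝ (Fin n)) :
    condDist Λ Λc f h₁ h₂ x w = condDist Λ Λc f h₁ h₂ x' w := by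
  by_cases hw : w ∈ Λ
  swap
  · rw [condDist_eq_zero_of_notMem f hw, condDist_eq_zero_of_notMem f hw]
  have hα2 : α ≤ 2 := by
    have hh₁1 : 1 ≤ |(h₁ : ℝ)| := by exact_mod_cast Int.one_le_abs hh₁
    nlinarith [abs_nonneg (h₂ : ℝ)]
  obtain ⟨a, b, hab⟩ := hco
  have hinj := zsmul_injective_of_forall_notMem horder
  have hω : w ∈ coset Λ Λc (QuotientAddGroup.mk ⟨w, hw⟩) := ⟨hw, rfl⟩
  obtain ⟨c, hc⟩ := Finite.surjective_of_injective hinj (x - a • QuotientAddGroup.mk ⟨w, hw⟩)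
  obtain ⟨c', hc'⟩ := Finite.surjective_of_injective hinj (x' - a • QuotientAddGroup.mk ⟨w, hw⟩)
  obtain rfl := (add_eq_of_eq_sub' hc).symm
  obtain rfl := (add_eq_of_eq_sub' hc').symm
  have hg := cosetMass_mul_eq_tsum_mul_of_support_fourier_subset hle hcont hr hf
    (m := h₂) (k := -h₁) (by exact_mod_cast hh₂) (by exact_mod_cast neg_ne_zero.2 hh₁)
    (by rwa [abs_neg, add_comm]) hsupp ((a : ℝ) • w) ((b : ℝ) • w)
  simp only [neg_smul, ← sub_eq_add_neg] at hg
  simp only [condDist_of_mem_coset hinj hab hω, hg,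
    cosetMass_eq_tsum_of_support_fourier_subset hle hcont hr hf hα2 hsupp]

end Secrecy

theorem stmt_0_general {n : ℕ} (Λ Λc : AddSubgroup (EuclideanSpace ℝ (Fin n)))
    [DiscreteTopology Λc] (hle : Λc ≤ Λ) [Finite (Λ ⧸ Λc.addSubgroupOf Λ)]
    (h₁ h₂ : ℤ) (hh₁ : h₁ ≠ 0) (hh₂ : h₂ ≠ 0) (hco : IsCoprime h₁ h₂)
    (horder : ∀ l ∈ Λ, l ∉ Λc → h₂ • l ∉ Λc)
    (f : EuclideanSpace ℝ (Fin n) → ℝ) (hcont : Continuous f) (hf0 : ∫ x, f x ≠ 0) {r : ℝ}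
    (hr : n < r) (hdecay : f =O[⊤] fun x ↦ (1 + ‖x‖) ^ (-r))
    (hsupp : ∀ t : EuclideanSpace ℝ (Fin n),
      t ∉ interior ((2 / (|(h₁ : ℝ)| + |(h₂ : ℝ)|)) •
          voronoi (fourierDual (Λc : Set (EuclideanSpace ℝ (Fin n))))) →
        charFn f t = 0)
    (x x' : Λ ⧸ Λc.addSubgroupOf Λ) (w : EuclideanSpace ℝ (Fin n)) :
    condDist Λ Λc f h₁ h₂ x w = condDist Λ Λc f h₁ h₂ x' w := by
  have hα0 : 0 < 2 / (|(h₁ : ℝ)| + |(h₂ : ℝ)|) := by positivity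
  have hzero : 0 ∈ interior ((2 / (|(h₁ : ℝ)| + |(h₂ : ℝ)|)) •
      voronoi (fourierDual (Λc : Set (EuclideanSpace ℝ (Fin n))))) := by
    refine by_contra fun h ↦ hf0 ?_
    exact_mod_cast (charFn_zero f).symm.trans (hsupp 0 h)
  have : DiscreteTopology (AddSubgroup.toIntSubmodule Λc) :=
    inferInstanceAs (DiscreteTopology Λc)
  have : IsZLattice ℝ (AddSubgroup.toIntSubmodule Λc) :=
    ⟨span_eq_top_of_zero_mem_interior_smul_voronoi hα0.ne' hzero⟩
  refine condDist_eq_of_support_fourier_subset hle hh₁ hh₂ hco horder hcont hr hdecay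
    (mul_div_cancel₀ _ (by positivity)).le (fun v hv ↦ ?_) x x' w
  refine mem_openVoronoiCell_of_neg_two_pi_smul_mem_interior hα0 (by_contra fun h ↦ hv ?_)
  rw [fourier_ofReal_eq_charFn, hsupp _ h]

/-- **perfect secrecy.** Let `Λc ⊆ Λ` be nested lattices in `ℝⁿ` with finite
quotient `Λ/Λc` of cardinality `M`, and let `h₁, h₂` be nonzero coprime integers such that no
nonzero element of `Λ/Λc` has order dividing `h₁` or `h₂`. Let `f` be a continuous, integrable
probability density with decay bound `f(x) ≤ C(1+‖x‖)^{−(n+δ)}`, whose characteristic function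
`ψ` vanishes outside the interior of `(2/(|h₁|+|h₂|))·V(Λ̂c)`, and whose restriction to each
coset of `Λc` in `Λ` is summable with finite positive total mass. Then the conditional
distributions of the relay's observation `W = h₁·U + h₂·V` given distinct messages coincide:
`P_x(w) = P_{x'}(w)` for all cosets `x, x'` and all `w`, i.e. `W` is independent of the
message. -/
theorem stmt_0 {n : ℕ} (Λ Λc : AddSubgroup (EuclideanSpace ℝ (Fin n)))
    [DiscreteTopology Λ] [DiscreteTopology Λc] (hle : Λc ≤ Λ)
    [Finite (Λ ⧸ Λc.addSubgroupOf Λ)] (M : ℕ) (hM : Nat.card (Λ ⧸ Λc.addSubgroupOf Λ) = M)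
    (h₁ h₂ : ℤ) (hh₁ : h₁ ≠ 0) (hh₂ : h₂ ≠ 0) (hco : IsCoprime h₁ h₂)
    (horder : ∀ l ∈ Λ, l ∉ Λc → h₁ • l ∉ Λc ∧ h₂ • l ∉ Λc)
    (f : EuclideanSpace ℝ (Fin n) → ℝ)
    (hcont : Continuous f) (hnonneg : ∀ x, 0 ≤ f x) (hint : Integrable f)
    (hprob : ∫ x, f x = 1)
    (hdecay : ∃ C δ : ℝ, 0 < C ∧ 0 < δ ∧
      ∀ x : EuclideanSpace ℝ (Fin n), f x ≤ C * (1 + ‖x‖) ^ (-((n : ℝ) + δ)))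
    (hsupp : ∀ t : EuclideanSpace ℝ (Fin n),
      t ∉ interior ((2 / (|(h₁ : ℝ)| + |(h₂ : ℝ)|)) •
          voronoi (fourierDual (Λc : Set (EuclideanSpace ℝ (Fin n))))) →
        charFn f t = 0)
    (hmass : ∀ c : Λ ⧸ Λc.addSubgroupOf Λ,
      Summable (fun u : coset Λ Λc c => f u) ∧ 0 < cosetMass Λ Λc f c) :
    ∀ (x x' : Λ ⧸ Λc.addSubgroupOf Λ) (w : EuclideanSpace ℝ (Fin n)),
      condDist Λ Λc f h₁ h₂ x w = condDist Λ Λc f h₁ h₂ x' w := by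
  obtain ⟨C, δ, -, hδ, hC⟩ := hdecay
  have hdecay' : f =O[⊤] fun x ↦ (1 + ‖x‖) ^ (-(n + δ)) := isBigO_top.2 ⟨C, fun x ↦ by
    rw [Real.norm_of_nonneg (hnonneg x), Real.norm_of_nonneg (by positivity)]
    exact hC x⟩
  exact stmt_0_general Λ Λc hle h₁ h₂ hh₁ hh₂ hco (fun l hl hlc ↦ (horder l hl hlc).2) f hcont
    (by simp [hprob]) (lt_add_of_pos_right _ hδ) hdecay' hsupp

end
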